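/- Let n ≥ 1 and q = ⌊n/3⌋, and for each integer k let p_{n,k} denote the number of preference orders σ ∈ {±1}^n with ν_max(σ) = k. Then for 0 ≤ k < q, p_{n,k} equals the number of σ ∈ {±1}^n with ⌊(n − max(h(σ),h(−σ)))/2⌋ = k, and p_{n,q} equals the number of σ ∈ {±1}^n with ⌊(n − max(h(σ),h(−σ)))/2⌋ ≥ q. -/

import Mathlib

namespace Napkin

variable {n q : ℕ}

/-- The napkin to the left of seat `s`; napkin `s` itself is the one to the right of
seat `s`, placed between seats `s` and `s + 1` around the circular table. -/
def leftNapkin (s : Fin n) : Fin n := ⟨((s : ℕ) + (n - 1)) % n, Nat.mod_lt _ s.pos⟩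

/-- Process the diners `0, 1, …, n-1` in their arrival order.  Here `w i = j` means that
diner `j` sits in seat `i` (so diner `j` sits in seat `w.symm j`), and `σ j = true`
means diner `j` prefers the napkin to their right.  Each diner takes their preferred
adjacent napkin if it is unclaimed, otherwise the other adjacent napkin if it is
unclaimed, and otherwise is napkinless.  The returned state consists of the set of
claimed napkins and the set of napkinless diners. -/
def dine (σ : Fin n → Bool) (w : Equiv.Perm (Fin n)) :
    Finset (Fin n) × Finset (Fin n) :=
  (List.finRange n).foldl
    (fun st j =>
      let s := w.symm j
      let pref := if σ j then s else leftNapkin s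
      let other := if σ j then leftNapkin s else s
      if pref ∉ st.1 then (insert pref st.1, st.2)
      else if other ∉ st.1 then (insert other st.1, st.2)
      else (st.1, insert j st.2))
    (∅, ∅)

/-- The set of napkinless diners for the seating arrangement `(w, σ)`. -/
def napkinless (σ : Fin n → Bool) (w : Equiv.Perm (Fin n)) : Finset (Fin n) :=
  (dine σ w).2

/-- `ν(w,σ)`, the number of napkinless diners. -/
def nu (σ : Fin n → Bool) (w : Equiv.Perm (Fin n)) : ℕ := (napkinless σ w).card

/-- A seating order puts diner `1` in seat `1` (index `0` here). -/
def IsSeating (w : Equiv.Perm (Fin n)) : Prop :=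
  ∀ i : Fin n, (i : ℕ) = 0 → (w i : ℕ) = 0

instance : DecidablePred (IsSeating (n := n)) := fun w =>
  decidable_of_iff (∀ i : Fin n, (i : ℕ) = 0 → (w i : ℕ) = 0) Iff.rfl

/-- `ν_max(σ)`, the maximal number of napkinless diners over all seating orders. -/
def nuMax (σ : Fin n → Bool) : ℕ :=
  (Finset.univ.filter fun w : Equiv.Perm (Fin n) => IsSeating w).sup (nu σ)

/-- The value `±1` of a napkin preference. -/
def sign (b : Bool) : ℤ := if b then 1 else -1

/-- The drift `h(σ) = max(0, max over prefixes of σ₁ + ⋯ + σᵢ)`. -/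
def drift (σ : Fin n → Bool) : ℕ :=
  (Finset.range (n + 1)).sup fun i =>
    (∑ j ∈ Finset.univ.filter (fun j : Fin n => (j : ℕ) < i), sign (σ j)).toNat

/-- A bench collection: `q` pairwise disjoint triples `aᵢ < bᵢ < cᵢ` in `{1,…,n}`. -/
structure BenchCollection (n q : ℕ) where
  a : Fin q → Fin n
  b : Fin q → Fin n
  c : Fin q → Fin n
  hab : ∀ i, a i < b i
  hbc : ∀ i, b i < c i
  disj : ∀ i j : Fin q, i ≠ j →
    Disjoint ({a i, b i, c i} : Finset (Fin n)) ({a j, b j, c j} : Finset (Fin n))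

/-- A bench is balanced when its two smallest members have opposite preferences. -/
def Balanced (σ : Fin n → Bool) (β : BenchCollection n q) (i : Fin q) : Prop :=
  sign (σ (β.a i)) + sign (σ (β.b i)) = 0

instance (σ : Fin n → Bool) (β : BenchCollection n q) :
    DecidablePred (Balanced σ β) := fun i =>
  decidable_of_iff (sign (σ (β.a i)) + sign (σ (β.b i)) = 0) Iff.rfl

/-- `b(β,σ)`, the number of balanced benches of `β`. -/
def balance (σ : Fin n → Bool) (β : BenchCollection n q) : ℕ :=
  (Finset.univ.filter fun i => Balanced σ β i).card

structure Spec (e : Equiv.Perm (Fin n)) (σ : Fin n → Bool) (T L R N : Finset (Fin n)) : Prop where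
  cover : ∀ x, x ∈ T ↔ x ∈ L ∨ x ∈ R ∨ x ∈ N
  LR : ∀ x, x ∈ L → x ∉ R
  LN : ∀ x, x ∈ L → x ∉ N
  RN : ∀ x, x ∈ R → x ∉ N
  N1 : ∀ x, x ∈ N → e x ∈ L ∧ e x < x
  N2 : ∀ x, x ∈ N → e.symm x ∈ R ∧ e.symm x < x
  L1 : ∀ x, x ∈ L → σ x = true → e x ∈ L ∧ e x < x
  R1 : ∀ x, x ∈ R → σ x = false → e.symm x ∈ R ∧ e.symm x < x
  conf : ∀ x, x ∈ R → e x ∉ L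

theorem Spec.flip {e : Equiv.Perm (Fin n)} {σ : Fin n → Bool} {T L R N : Finset (Fin n)}
    (h : Spec e σ T L R N) : Spec e.symm (fun j => !σ j) T R L N where
  cover x := by rw [h.cover]; tauto
  LR x hx hx' := h.LR x hx' hx
  LN := h.RN
  RN := h.LN
  N1 := h.N2
  N2 := by simpa using h.N1
  L1 x hx hs := h.R1 x hx (by simpa using hs)
  R1 x hx hs := by simpa using h.L1 x hx (by simpa using hs)
  conf x hx hx' := by have := h.conf _ hx'; simp at this; exact this hx

theorem leftNapkin_inj : Function.Injective (leftNapkin (n := n)) := by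
  intro s t h
  have h1 := congrArg Fin.val h
  simp only [leftNapkin] at h1
  have hs := s.isLt
  have ht := t.isLt
  have key : ∀ x < n, (x + (n - 1)) % n = if x = 0 then n - 1 else x - 1 := by
    intro x hx
    split_ifs with h0
    · subst h0; rw [Nat.zero_add]; exact Nat.mod_eq_of_lt (by omega)
    · rw [show x + (n-1) = (x - 1) + n by omega, Nat.add_mod_right]
      exact Nat.mod_eq_of_lt (by omega)
  rw [key _ hs, key _ ht] at h1
  apply Fin.ext
  split_ifs at h1 <;> omega

noncomputable def lam (n : ℕ) : Equiv.Perm (Fin n) :=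
  Equiv.ofBijective leftNapkin (Finite.injective_iff_bijective.mp leftNapkin_inj)

theorem lam_apply (s : Fin n) : lam n s = leftNapkin s := rfl

/-- right neighbour -/
noncomputable def nb (w : Equiv.Perm (Fin n)) : Equiv.Perm (Fin n) :=
  (w.symm.trans (lam n).symm).trans w

def step (σ : Fin n → Bool) (w : Equiv.Perm (Fin n)) (st : Finset (Fin n) × Finset (Fin n))
    (j : Fin n) : Finset (Fin n) × Finset (Fin n) :=
      let s := w.symm j
      let pref := if σ j then s else leftNapkin s
      let other := if σ j then leftNapkin s else s
      if pref ∉ st.1 then (insert pref st.1, st.2)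
      else if other ∉ st.1 then (insert other st.1, st.2)
      else (st.1, insert j st.2)

def Inv (σ : Fin n → Bool) (w : Equiv.Perm (Fin n)) (T : Finset (Fin n))
    (st : Finset (Fin n) × Finset (Fin n)) : Prop :=
  ∃ L R, Spec (nb w) σ T L R st.2 ∧ ∀ x, w.symm x ∈ st.1 ↔ (x ∈ R ∨ nb w x ∈ L)

theorem inv_step (σ : Fin n → Bool) (w : Equiv.Perm (Fin n)) (T : Finset (Fin n))
    (st : Finset (Fin n) × Finset (Fin n)) (j : Fin n) (hj : ∀ x ∈ T, x < j)
    (h : Inv σ w T st) : Inv σ w (insert j T) (step σ w st j) := by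
  obtain ⟨L, R, h, hC⟩ := h
  have hjT : j ∉ T := fun h' => lt_irrefl _ (hj j h')
  have hjL : j ∉ L := fun h' => hjT ((h.cover j).2 (by tauto))
  have hjR : j ∉ R := fun h' => hjT ((h.cover j).2 (by tauto))
  have hjN : j ∉ st.2 := fun h' => hjT ((h.cover j).2 (by tauto))
  have hL : ∀ x ∈ L, x < j := fun x h' => hj x ((h.cover x).2 (by tauto))
  have hR : ∀ x ∈ R, x < j := fun x h' => hj x ((h.cover x).2 (by tauto))
  have hln : leftNapkin (w.symm j) = w.symm ((nb w).symm j) := by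
    simp [nb, lam_apply]
  have hs : w.symm j ∈ st.1 ↔ nb w j ∈ L := by rw [hC]; tauto
  have hl : leftNapkin (w.symm j) ∈ st.1 ↔ (nb w).symm j ∈ R := by
    rw [hln, hC]; simp; tauto
  unfold Inv
  generalize nb w = e at *
  obtain ⟨h1, h2, h3, h4, h5, h6, h7, h8, h9⟩ := h
  -- three outcomes
  have outR : w.symm j ∉ st.1 → (σ j = false → leftNapkin (w.symm j) ∈ st.1) →
      ∃ L R, Spec e σ (insert j T) L R st.2 ∧
        ∀ x, w.symm x ∈ insert (w.symm j) st.1 ↔ (x ∈ R ∨ e x ∈ L) := by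
    intro ha hb
    refine ⟨L, insert j R, ⟨?_, ?_, ?_, ?_, ?_, ?_, ?_, ?_, ?_⟩, ?_⟩
    · intro x; simp only [Finset.mem_insert, h1]; clear * - x; tauto
    · intro x hx hx'
      rcases Finset.mem_insert.1 hx' with rfl | hx'
      · exact hjL hx
      · exact h2 x hx hx'
    · exact h3
    · intro x hx
      rcases Finset.mem_insert.1 hx with rfl | hx
      · exact hjN
      · exact h4 x hx
    · exact h5
    · intro x hx; exact ⟨Finset.mem_insert_of_mem (h6 x hx).1, (h6 x hx).2⟩
    · exact h7
    · intro x hx hσ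
      rcases Finset.mem_insert.1 hx with rfl | hx
      · have := hl.1 (hb hσ)
        exact ⟨Finset.mem_insert_of_mem this, hR _ this⟩
      · exact ⟨Finset.mem_insert_of_mem (h8 x hx hσ).1, (h8 x hx hσ).2⟩
    · intro x hx
      rcases Finset.mem_insert.1 hx with rfl | hx
      · exact fun h' => ha (hs.2 h')
      · exact h9 x hx
    · intro x; simp only [Finset.mem_insert, hC, EmbeddingLike.apply_eq_iff_eq]; clear * - x; tauto
  have outL : leftNapkin (w.symm j) ∉ st.1 → (σ j = true → w.symm j ∈ st.1) →
      ∃ L R, Spec e σ (insert j T) L R st.2 ∧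
        ∀ x, w.symm x ∈ insert (leftNapkin (w.symm j)) st.1 ↔ (x ∈ R ∨ e x ∈ L) := by
    intro ha hb
    refine ⟨insert j L, R, ⟨?_, ?_, ?_, ?_, ?_, ?_, ?_, ?_, ?_⟩, ?_⟩
    · intro x; simp only [Finset.mem_insert, h1]; clear * - x; tauto
    · intro x hx
      rcases Finset.mem_insert.1 hx with rfl | hx
      · exact hjR
      · exact h2 x hx
    · intro x hx
      rcases Finset.mem_insert.1 hx with rfl | hx
      · exact hjN
      · exact h3 x hx
    · exact h4
    · intro x hx; exact ⟨Finset.mem_insert_of_mem (h5 x hx).1, (h5 x hx).2⟩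
    · exact h6
    · intro x hx hσ
      rcases Finset.mem_insert.1 hx with rfl | hx
      · have := hs.1 (hb hσ)
        exact ⟨Finset.mem_insert_of_mem this, hL _ this⟩
      · exact ⟨Finset.mem_insert_of_mem (h7 x hx hσ).1, (h7 x hx hσ).2⟩
    · exact h8
    · intro x hx hx'
      rcases Finset.mem_insert.1 hx' with h' | h'
      · apply ha; rw [hl, ← h']; simpa using hx
      · exact h9 x hx h'
    · intro x
      have : x = e.symm j ↔ e x = j := by rw [Equiv.eq_symm_apply]
      simp only [Finset.mem_insert, hC, hln, EmbeddingLike.apply_eq_iff_eq, this]; clear * - x; tauto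
  have outN : leftNapkin (w.symm j) ∈ st.1 → w.symm j ∈ st.1 →
      ∃ L R, Spec e σ (insert j T) L R (insert j st.2) ∧
        ∀ x, w.symm x ∈ st.1 ↔ (x ∈ R ∨ e x ∈ L) := by
    intro ha hb
    refine ⟨L, R, ⟨?_, h2, ?_, ?_, ?_, ?_, h7, h8, h9⟩, hC⟩
    · intro x; simp only [Finset.mem_insert, h1]; clear * - x; tauto
    · intro x hx hx'
      rcases Finset.mem_insert.1 hx' with rfl | hx'
      · exact hjL hx
      · exact h3 x hx hx'
    · intro x hx hx'
      rcases Finset.mem_insert.1 hx' with rfl | hx'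
      · exact hjR hx
      · exact h4 x hx hx'
    · intro x hx
      rcases Finset.mem_insert.1 hx with rfl | hx
      · exact ⟨hs.1 hb, hL _ (hs.1 hb)⟩
      · exact h5 x hx
    · intro x hx
      rcases Finset.mem_insert.1 hx with rfl | hx
      · exact ⟨hl.1 ha, hR _ (hl.1 ha)⟩
      · exact h6 x hx
  unfold step
  cases hσ : σ j
  · simp only [hσ, Bool.false_eq_true, if_false]
    by_cases ha : leftNapkin (w.symm j) ∈ st.1
    · by_cases hb : w.symm j ∈ st.1
      · simp only [ha, hb, not_true, if_false]; exact outN ha hb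
      · simp only [ha, hb, not_true, if_false, not_false_iff, if_true]
        exact outR hb (fun _ => ha)
    · simp only [ha, not_false_iff, if_true]
      exact outL ha (by simp [hσ])
  · simp only [hσ, if_true]
    by_cases hb : w.symm j ∈ st.1
    · by_cases ha : leftNapkin (w.symm j) ∈ st.1
      · simp only [ha, hb, not_true, if_false]; exact outN ha hb
      · simp only [ha, hb, not_true, if_false, not_false_iff, if_true]
        exact outL ha (fun _ => hb)
    · simp only [hb, not_false_iff, if_true]
      exact outR hb (by simp [hσ])

theorem inv_fold (σ : Fin n → Bool) (w : Equiv.Perm (Fin n)) (l : List (Fin n)) :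
    ∀ (T : Finset (Fin n)) (st : Finset (Fin n) × Finset (Fin n)), Inv σ w T st →
    (∀ x ∈ T, ∀ y ∈ l, x < y) → l.Pairwise (· < ·) →
    Inv σ w (T ∪ l.toFinset) (l.foldl (step σ w) st) := by
  induction l with
  | nil => intro T st h _ _; simpa using h
  | cons j l ih =>
    intro T st h hT hl
    rw [List.pairwise_cons] at hl
    have := ih (insert j T) (step σ w st j)
      (inv_step σ w T st j (fun x hx => hT x hx j (by simp)) h) (by
        intro x hx y hy
        rcases Finset.mem_insert.1 hx with rfl | hx
        · exact hl.1 y hy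
        · exact hT x hx y (by simp [hy])) hl.2
    rw [List.foldl_cons]
    convert this using 1
    ext x; simp

theorem dine_spec (σ : Fin n → Bool) (w : Equiv.Perm (Fin n)) :
    ∃ L R, Spec (nb w) σ Finset.univ L R (napkinless σ w) := by
  have h0 : Inv σ w ∅ (∅, ∅) :=
    ⟨∅, ∅, by constructor <;> simp, by simp⟩
  have := inv_fold σ w (List.finRange n) ∅ (∅, ∅) h0 (by simp) (List.pairwise_lt_finRange n)
  obtain ⟨L, R, h, -⟩ := this
  refine ⟨L, R, ?_⟩
  have hu : (∅ ∪ (List.finRange n).toFinset : Finset (Fin n)) = Finset.univ := by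
    ext x; simp
  rw [hu] at h
  exact h

/-! ### upper bounds -/

theorem Spec.card3 {e : Equiv.Perm (Fin n)} {σ : Fin n → Bool} {T L R N : Finset (Fin n)}
    (h : Spec e σ T L R N) : 3 * N.card ≤ n := by
  have h1 : N.card ≤ L.card :=
    Finset.card_le_card_of_injOn e (fun x hx => (h.N1 x hx).1) (e.injective.injOn)
  have h2 : N.card ≤ R.card :=
    Finset.card_le_card_of_injOn e.symm (fun x hx => (h.N2 x hx).1) (e.symm.injective.injOn)
  have d1 : Disjoint L R := Finset.disjoint_left.2 h.LR
  have d2 : Disjoint (L ∪ R) N := by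
    rw [Finset.disjoint_left]; intro x hx
    rcases Finset.mem_union.1 hx with hx | hx
    · exact h.LN x hx
    · exact h.RN x hx
  have h3 := Finset.card_le_univ ((L ∪ R) ∪ N)
  rw [Finset.card_union_of_disjoint d2, Finset.card_union_of_disjoint d1, Fintype.card_fin] at h3
  omega

theorem Spec.chain {e : Equiv.Perm (Fin n)} {σ : Fin n → Bool} {T L R N : Finset (Fin n)}
    (h : Spec e σ T L R N) : ∀ x ∈ L, ∃ d : ℕ, σ ((e ^ d) x) = false ∧ (e ^ d) x ≤ x ∧
      ∀ i ≤ d, (e ^ i) x ∈ L := by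
  intro x
  induction x using WellFoundedLT.induction with
  | ind x ih =>
    intro hx
    cases hs : σ x
    · exact ⟨0, by simpa using hs, by simp, by intro i hi; simpa [Nat.le_zero.1 hi] using hx⟩
    · obtain ⟨h1, h2⟩ := h.L1 x hx hs
      obtain ⟨d, hd1, hd2, hd3⟩ := ih _ h2 h1
      refine ⟨d + 1, by simpa [pow_succ] using hd1, ?_, ?_⟩
      · simp only [pow_succ, Equiv.Perm.mul_apply]; exact hd2.trans h2.le
      · intro i hi
        cases i with
        | zero => simpa using hx
        | succ i => simpa [pow_succ] using hd3 i (by omega)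

theorem Spec.exists_m {e : Equiv.Perm (Fin n)} {σ : Fin n → Bool} {T L R N : Finset (Fin n)}
    (h : Spec e σ T L R N) : ∃ m : Fin n → Fin n, Set.InjOn m N ∧
      ∀ c ∈ N, m c < c ∧ m c ∉ N ∧ σ (m c) = false := by
  have h1 : ∀ c : Fin n, ∃ d : ℕ, c ∈ N → σ ((e ^ d) (e c)) = false ∧ (e ^ d) (e c) < c ∧
      ∀ i ≤ d, (e ^ i) (e c) ∈ L := by
    intro c
    by_cases hc : c ∈ N
    · obtain ⟨d, a, b, g⟩ := h.chain _ (h.N1 c hc).1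
      exact ⟨d, fun _ => ⟨a, b.trans_lt (h.N1 c hc).2, g⟩⟩
    · exact ⟨0, fun h' => absurd h' hc⟩
  choose d hd using h1
  have key : ∀ c ∈ N, ∀ c' ∈ N, d c ≤ d c' → (e ^ d c) (e c) = (e ^ d c') (e c') → c = c' := by
    intro c hc c' hc' hle heq
    obtain ⟨r, hr⟩ := Nat.exists_eq_add_of_le hle
    rw [hr, pow_add, Equiv.Perm.mul_apply] at heq
    have h2 := (e ^ d c).injective heq
    cases r with
    | zero => simpa using h2
    | succ r =>
      rw [pow_succ', Equiv.Perm.mul_apply] at h2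
      have h3 := e.injective h2
      have h4 := (hd c' hc').2.2 r (by omega)
      rw [← h3] at h4
      exact absurd hc (h.LN c h4)
  refine ⟨fun c => (e ^ d c) (e c), ?_, ?_⟩
  · intro c hc c' hc' heq
    rcases le_total (d c) (d c') with hle | hle
    · exact key c hc c' hc' hle heq
    · exact (key c' hc' c hc hle heq.symm).symm
  · intro c hc
    obtain ⟨a, b, g⟩ := hd c hc
    exact ⟨b, h.LN _ (g _ le_rfl), a⟩

theorem sum_sign (σ : Fin n → Bool) (S : Finset (Fin n)) :
    ∑ j ∈ S, sign (σ j) = (S.card : ℤ) - 2 * (S.filter (fun j => σ j = false)).card := by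
  induction S using Finset.induction_on with
  | empty => simp
  | insert a S ha ih =>
    rw [Finset.sum_insert ha, ih, Finset.card_insert_of_notMem ha, Finset.filter_insert]
    cases h : σ a
    · rw [if_pos rfl, Finset.card_insert_of_notMem (by simp [ha])]
      simp [sign]; ring
    · simp [sign]; ring

theorem Spec.drift_le {e : Equiv.Perm (Fin n)} {σ : Fin n → Bool} {T L R N : Finset (Fin n)}
    (h : Spec e σ T L R N) : 2 * N.card + drift σ ≤ n := by
  obtain ⟨m, hm, hN⟩ := h.exists_m
  have h3 := h.card3
  have : drift σ ≤ n - 2 * N.card := by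
    apply Finset.sup_le
    intro i _
    rw [sum_sign]
    set S := Finset.univ.filter (fun j : Fin n => (j : ℕ) < i) with hS
    set A := N.image m with hA
    have hAc : A.card = N.card := Finset.card_image_of_injOn hm
    have hd : Disjoint N A := by
      rw [Finset.disjoint_left]; intro x hx hx'
      obtain ⟨c, hc, rfl⟩ := Finset.mem_image.1 hx'
      exact (hN c hc).2.1 hx
    have e1 : (N ∩ S).card ≤ (A ∩ S).card := by
      apply Finset.card_le_card_of_injOn m
      · intro c hc
        have hc' := Finset.mem_inter.1 hc
        refine Finset.mem_inter.2 ⟨Finset.mem_image_of_mem _ hc'.1, ?_⟩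
        have h1 := hc'.2
        have h2 := (hN c hc'.1).1
        simp only [hS, Finset.mem_filter, Finset.mem_univ, true_and] at h1 ⊢
        have := Fin.lt_def.1 h2
        omega
      · exact hm.mono (by intro x hx; exact (Finset.mem_inter.1 hx).1)
    have e2 : (A ∩ S).card ≤ (S.filter (fun j => σ j = false)).card := by
      apply Finset.card_le_card
      intro x hx
      obtain ⟨h1, h2⟩ := Finset.mem_inter.1 hx
      obtain ⟨c, hc, rfl⟩ := Finset.mem_image.1 h1
      exact Finset.mem_filter.2 ⟨h2, (hN c hc).2.2⟩
    have e3 : ((N ∪ A) \ S).card + S.card ≤ n := by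
      rw [← Finset.card_union_of_disjoint Finset.sdiff_disjoint]
      simpa using Finset.card_le_univ ((N ∪ A) \ S ∪ S)
    have e4 : ((N ∪ A) \ S).card = (N \ S).card + (A \ S).card := by
      rw [Finset.union_sdiff_distrib, Finset.card_union_of_disjoint]
      exact hd.mono Finset.sdiff_subset Finset.sdiff_subset
    have e5 := Finset.card_sdiff_add_card_inter N S
    have e6 := Finset.card_sdiff_add_card_inter A S
    omega
  omega

/-! ### lower bound -/

theorem first_k (P : Finset (Fin n)) (k : ℕ) (h : k ≤ P.card) :
    ∃ A ⊆ P, A.card = k ∧ ∀ a ∈ A, ∀ p ∈ P, p ∉ A → a < p := by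
  induction k with
  | zero => exact ⟨∅, by simp, by simp, by simp⟩
  | succ k ih =>
    obtain ⟨A, hA, hc, hlt⟩ := ih (by omega)
    have hne : (P \ A).Nonempty := by
      rw [← Finset.card_pos, Finset.card_sdiff_of_subset hA]; omega
    have hm := (P \ A).min'_mem hne
    set p0 := (P \ A).min' hne with hp0
    obtain ⟨hm1, hm2⟩ := Finset.mem_sdiff.1 hm
    refine ⟨insert p0 A, ?_, ?_, ?_⟩
    · exact Finset.insert_subset hm1 hA
    · rw [Finset.card_insert_of_notMem hm2, hc]
    · intro a ha p hp hpA
      rw [Finset.mem_insert, not_or] at hpA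
      rcases Finset.mem_insert.1 ha with rfl | ha
      · exact lt_of_le_of_ne (Finset.min'_le _ _ (Finset.mem_sdiff.2 ⟨hp, hpA.2⟩)) (Ne.symm hpA.1)
      · exact hlt a ha p hp hpA.2

theorem last_k (P : Finset (Fin n)) (k : ℕ) (h : k ≤ P.card) :
    ∃ N ⊆ P, N.card = k ∧ ∀ a ∈ N, ∀ p ∈ P, p ∉ N → p < a := by
  obtain ⟨A, hA, hc, hlt⟩ := first_k P (P.card - k) (by omega)
  refine ⟨P \ A, Finset.sdiff_subset, ?_, ?_⟩
  · rw [Finset.card_sdiff_of_subset hA]; omega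
  · intro a ha p hp hpN
    obtain ⟨h1, h2⟩ := Finset.mem_sdiff.1 ha
    have : p ∈ A := by by_contra h'; exact hpN (Finset.mem_sdiff.2 ⟨hp, h'⟩)
    exact hlt p this a h1 h2

theorem count_le (P Q A B N : Finset (Fin n)) (k : ℕ)
    (hPQ : ∀ x, x ∈ P ∨ x ∈ Q) (hdPQ : Disjoint P Q)
    (hA : A ⊆ P) (hAc : A.card = k) (hAf : ∀ a ∈ A, ∀ p ∈ P, p ∉ A → a < p)
    (hB : B ⊆ Q) (hBf : ∀ a ∈ B, ∀ p ∈ Q, p ∉ B → a < p)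
    (hNA : Disjoint N A) (hNB : Disjoint N B) (hNc : N.card = k)
    (hNl : ∀ a ∈ N, ∀ p, p ∉ A → p ∉ B → p ∉ N → p < a)
    (hdr : ∀ x : Fin n, (Q.filter (· ≤ x)).card + 2 * k ≤ n + (P.filter (· ≤ x)).card) :
    ∀ x ∈ N, (N.filter (· ≤ x)).card ≤ (A.filter (· < x)).card := by
  intro x hx
  by_contra hcon
  push Not at hcon
  have hxA : x ∉ A := Finset.disjoint_left.1 hNA hx
  have hxB : x ∉ B := Finset.disjoint_left.1 hNB hx
  have hNle : (N.filter (· ≤ x)).card ≤ k := hNc ▸ Finset.card_filter_le _ _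
  obtain ⟨a, ha, hax⟩ : ∃ a ∈ A, x < a := by
    by_contra h'
    push Not at h'
    have : A.filter (· < x) = A := by
      apply Finset.filter_true_of_mem
      intro a ha
      exact lt_of_le_of_ne (h' a ha) (by rintro rfl; exact hxA ha)
    rw [this] at hcon
    omega
  have hxP : x ∉ P := fun h' => absurd (hAf a ha x h' hxA) (not_lt.2 hax.le)
  have hxQ : x ∈ Q := (hPQ x).resolve_left hxP
  have e1 : P.filter (· ≤ x) ⊆ A.filter (· < x) := by
    intro p hp
    obtain ⟨h1, h2⟩ := Finset.mem_filter.1 hp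
    have hpA : p ∈ A := by
      by_contra h'
      exact absurd (hAf a ha p h1 h') (not_lt.2 (h2.trans hax.le))
    exact Finset.mem_filter.2 ⟨hpA, lt_of_le_of_ne h2 (by rintro rfl; exact hxP h1)⟩
  have e1' := Finset.card_le_card e1
  have e2 : (Finset.univ : Finset (Fin n)) ⊆
      (P.filter (· ≤ x) ∪ Q.filter (· ≤ x)) ∪
        (A \ A.filter (· < x) ∪ N \ N.filter (· ≤ x)) := by
    intro y _
    simp only [Finset.mem_union, Finset.mem_filter, Finset.mem_sdiff]
    by_cases hy : y ≤ x
    · have := hPQ y; tauto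
    · have hy' : ¬ y < x := fun h' => hy h'.le
      right
      by_cases hyA : y ∈ A
      · tauto
      · right
        refine ⟨?_, by tauto⟩
        by_contra hyN
        have hyB : y ∉ B := fun h' => hy (hBf y h' x hxQ hxB).le
        exact hy' (hNl x hx y hyA hyB hyN)
  have e3 := Finset.card_le_card e2
  have e4 := Finset.card_union_le (P.filter (· ≤ x) ∪ Q.filter (· ≤ x))
    (A \ A.filter (· < x) ∪ N \ N.filter (· ≤ x))
  have e5 := Finset.card_union_le (P.filter (· ≤ x)) (Q.filter (· ≤ x))
  have e6 := Finset.card_union_le (A \ A.filter (· < x)) (N \ N.filter (· ≤ x))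
  have e7 := Finset.card_sdiff_add_card_eq_card (Finset.filter_subset (· < x) A)
  have e8 := Finset.card_sdiff_add_card_eq_card (Finset.filter_subset (· ≤ x) N)
  have e9 := hdr x
  rw [Finset.card_univ, Fintype.card_fin] at e3
  omega

theorem order_match (A N : Finset (Fin n)) (k : ℕ) (hA : A.card = k) (hN : N.card = k)
    (h : ∀ x ∈ N, (N.filter (· ≤ x)).card ≤ (A.filter (· < x)).card) (j : Fin k) :
    A.orderEmbOfFin hA j < N.orderEmbOfFin hN j := by
  by_contra hcon
  push Not at hcon
  have h1 := h _ (N.orderEmbOfFin_mem hN j)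
  have h2 : A.filter (· < N.orderEmbOfFin hN j) ⊆ (Finset.Iio j).image (A.orderEmbOfFin hA) := by
    intro y hy
    obtain ⟨ha, hb⟩ := Finset.mem_filter.1 hy
    have : y ∈ Set.range (A.orderEmbOfFin hA) := by rw [Finset.range_orderEmbOfFin]; exact ha
    obtain ⟨i, rfl⟩ := this
    refine Finset.mem_image_of_mem _ (Finset.mem_Iio.2 ?_)
    exact (A.orderEmbOfFin hA).lt_iff_lt.1 (hb.trans_le hcon)
  have h3 : (Finset.Iic j).image (N.orderEmbOfFin hN) ⊆ N.filter (· ≤ N.orderEmbOfFin hN j) := by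
    intro y hy
    obtain ⟨i, hi, rfl⟩ := Finset.mem_image.1 hy
    exact Finset.mem_filter.2 ⟨N.orderEmbOfFin_mem hN i,
      (N.orderEmbOfFin hN).le_iff_le.2 (Finset.mem_Iic.1 hi)⟩
  have h4 := Finset.card_le_card h2
  have h5 := Finset.card_le_card h3
  rw [Finset.card_image_of_injective _ (N.orderEmbOfFin hN).injective, Fin.card_Iic] at h5
  have h6 := (Finset.card_image_le (s := Finset.Iio j) (f := A.orderEmbOfFin hA))
  rw [Fin.card_Iio] at h6
  omega

theorem drift_ge (σ : Fin n → Bool) (i : ℕ) (hi : i ≤ n) :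
    ((Finset.univ.filter (fun j : Fin n => σ j = true)).filter (fun j : Fin n => (j : ℕ) < i)).card ≤
    drift σ +
    ((Finset.univ.filter (fun j : Fin n => σ j = false)).filter (fun j : Fin n => (j : ℕ) < i)).card := by
  have h := Finset.le_sup (s := Finset.range (n + 1)) (f := fun i =>
    (∑ j ∈ Finset.univ.filter (fun j : Fin n => (j : ℕ) < i), sign (σ j)).toNat)
    (Finset.mem_range.2 (Nat.lt_succ_of_le hi))
  change _ ≤ drift σ at h
  simp only [sum_sign] at h
  have h2 := Finset.card_filter_add_card_filter_not
    (s := Finset.univ.filter (fun j : Fin n => (j : ℕ) < i)) (fun j => σ j = false)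
  simp only [Bool.not_eq_false] at h2
  rw [Finset.filter_comm (fun j : Fin n => σ j = true),
    Finset.filter_comm (fun j : Fin n => σ j = false)]
  omega

theorem benches (σ : Fin n → Bool) (k : ℕ) (h3 : 3 * k ≤ n) (hd1 : 2 * k + drift σ ≤ n)
    (hd2 : 2 * k + drift (fun j => !σ j) ≤ n) :
    ∃ a b c : Fin k → Fin n, Function.Injective a ∧ Function.Injective b ∧ Function.Injective c ∧
      (∀ i j, a i ≠ b j) ∧ (∀ i j, a i ≠ c j) ∧ (∀ i j, b i ≠ c j) ∧
      (∀ i, σ (a i) = true) ∧ (∀ i, σ (b i) = false) ∧ (∀ i, a i < c i) ∧ (∀ i, b i < c i) := by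
  set P := Finset.univ.filter (fun j : Fin n => σ j = true) with hP
  set Q := Finset.univ.filter (fun j : Fin n => σ j = false) with hQ
  have d1 : ∀ i ≤ n, (P.filter (fun j : Fin n => (j : ℕ) < i)).card + 2 * k ≤
      n + (Q.filter (fun j : Fin n => (j : ℕ) < i)).card := by
    intro i hi; have := drift_ge σ i hi; rw [← hP, ← hQ] at this; omega
  have d2 : ∀ i ≤ n, (Q.filter (fun j : Fin n => (j : ℕ) < i)).card + 2 * k ≤
      n + (P.filter (fun j : Fin n => (j : ℕ) < i)).card := by
    intro i hi; have := drift_ge (fun j => !σ j) i hi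
    simp only [Bool.not_eq_true', Bool.not_eq_false'] at this
    rw [← hP, ← hQ] at this; omega
  have hall : ∀ S : Finset (Fin n), S.filter (fun j : Fin n => (j : ℕ) < n) = S := fun S =>
    Finset.filter_true_of_mem (fun x _ => x.isLt)
  have hPQ : ∀ x, x ∈ P ∨ x ∈ Q := by intro x; simp [hP, hQ]
  have hdPQ : Disjoint P Q := by
    rw [Finset.disjoint_left]; intro x; simp [hP, hQ]
  have hsum : P.card + Q.card = n := by
    rw [← Finset.card_union_of_disjoint hdPQ, show P ∪ Q = Finset.univ by
      ext x; simpa using hPQ x]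
    simp
  have c1 := d1 n le_rfl
  have c2 := d2 n le_rfl
  rw [hall, hall] at c1 c2
  obtain ⟨A, hA, hAc, hAf⟩ := first_k P k (by omega)
  obtain ⟨B, hB, hBc, hBf⟩ := first_k Q k (by omega)
  have hdAB : Disjoint A B := hdPQ.mono hA hB
  have hDc : (Finset.univ \ (A ∪ B)).card = n - 2 * k := by
    rw [Finset.card_sdiff_of_subset (Finset.subset_univ _), Finset.card_union_of_disjoint hdAB]
    simp; omega
  obtain ⟨N, hN, hNc, hNl⟩ := last_k (Finset.univ \ (A ∪ B)) k (by omega)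
  have hNA : Disjoint N A := by
    rw [Finset.disjoint_left]; intro x hx; have := hN hx; simp at this; tauto
  have hNB : Disjoint N B := by
    rw [Finset.disjoint_left]; intro x hx; have := hN hx; simp at this; tauto
  have conv : ∀ (x : Fin n) (S : Finset (Fin n)), S.filter (· ≤ x) =
      S.filter (fun j : Fin n => (j : ℕ) < (x : ℕ) + 1) := by
    intro x S; apply Finset.filter_congr; intro y _; rw [Fin.le_def]; omega
  have r1 := count_le P Q A B N k hPQ hdPQ hA hAc hAf hB hBf hNA hNB hNc
    (fun a ha p h1 h2 h3 => hNl a ha p (by simp [h1, h2]) h3)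
    (fun x => by rw [conv, conv]; exact d2 _ x.isLt)
  have r2 := count_le Q P B A N k (fun x => (hPQ x).symm) hdPQ.symm hB hBc hBf hA hAf hNB hNA hNc
    (fun a ha p h1 h2 h3 => hNl a ha p (by simp [h1, h2]) h3)
    (fun x => by rw [conv, conv]; exact d1 _ x.isLt)
  refine ⟨A.orderEmbOfFin hAc, B.orderEmbOfFin hBc, N.orderEmbOfFin hNc,
    (A.orderEmbOfFin hAc).injective, (B.orderEmbOfFin hBc).injective,
    (N.orderEmbOfFin hNc).injective, ?_, ?_, ?_, ?_, ?_,
    order_match A N k hAc hNc r1, order_match B N k hBc hNc r2⟩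
  · intro i j; exact Finset.disjoint_iff_ne.1 hdAB _ (A.orderEmbOfFin_mem hAc i) _
      (B.orderEmbOfFin_mem hBc j)
  · intro i j; exact Finset.disjoint_iff_ne.1 hNA.symm _ (A.orderEmbOfFin_mem hAc i) _
      (N.orderEmbOfFin_mem hNc j)
  · intro i j; exact Finset.disjoint_iff_ne.1 hNB.symm _ (B.orderEmbOfFin_mem hBc i) _
      (N.orderEmbOfFin_mem hNc j)
  · intro i; have := hA (A.orderEmbOfFin_mem hAc i); simpa [hP] using this
  · intro i; have := hB (B.orderEmbOfFin_mem hBc i); simpa [hQ] using this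

theorem Spec.mem_N {e : Equiv.Perm (Fin n)} {σ : Fin n → Bool} {L R N : Finset (Fin n)}
    (h : Spec e σ Finset.univ L R N) {a b c : Fin n} (hac : e a = c) (hcb : e c = b)
    (ha : σ a = true) (hb : σ b = false) (h1 : a < c) (h2 : b < c) : c ∈ N := by
  have hb' : e.symm b = c := by rw [← hcb]; simp
  have haR : a ∈ R := by
    rcases (h.cover a).1 (Finset.mem_univ _) with h' | h' | h'
    · have := (h.L1 a h' ha).2; rw [hac] at this; exact absurd this h1.asymm
    · exact h'
    · have := (h.N1 a h').2; rw [hac] at this; exact absurd this h1.asymm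
  have hbL : b ∈ L := by
    rcases (h.cover b).1 (Finset.mem_univ _) with h' | h' | h'
    · exact h'
    · have := (h.R1 b h' hb).2; rw [hb'] at this; exact absurd this h2.asymm
    · have := (h.N2 b h').2; rw [hb'] at this; exact absurd this h2.asymm
  rcases (h.cover c).1 (Finset.mem_univ _) with h' | h' | h'
  · exact absurd (hac ▸ h') (h.conf a haR)
  · exact absurd (hcb ▸ hbL) (h.conf c h')
  · exact h'

theorem leftNapkin_eq [NeZero n] (s : Fin n) : leftNapkin s = s - 1 := by
  apply Fin.ext
  simp only [leftNapkin, Fin.sub_def, Fin.val_one']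
  rcases Nat.lt_or_ge 1 n with h | h
  · rw [Nat.mod_eq_of_lt h, Nat.add_comm]
  · have := s.isLt
    have : n = 1 := by omega
    subst this
    simp [Nat.mod_one]

theorem exists_seating (σ : Fin n → Bool) (hn : 1 ≤ n) (k : ℕ) (h3 : 3 * k ≤ n)
    (hd1 : 2 * k + drift σ ≤ n) (hd2 : 2 * k + drift (fun j => !σ j) ≤ n) :
    ∃ w : Equiv.Perm (Fin n), IsSeating w ∧ k ≤ nu σ w := by
  classical
  haveI : NeZero n := ⟨by omega⟩
  obtain ⟨a, b, c, ia, ib, ic, hab, hac, hbc, sa, sb, lac, lbc⟩ := benches σ k h3 hd1 hd2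
  let f : Fin k × Fin 3 → Fin n := fun x => ⟨3 * x.1 + x.2, by
    have := x.1.isLt; have := x.2.isLt; omega⟩
  let g : Fin k × Fin 3 → Fin n := fun x => ![a x.1, c x.1, b x.1] x.2
  have hf : Function.Injective f := by
    rintro ⟨i, r⟩ ⟨i', r'⟩ h
    have := congrArg Fin.val h
    simp only [f] at this
    have := r.isLt; have := r'.isLt
    ext <;> simp <;> omega
  have hg : Function.Injective g := by
    rintro ⟨i, r⟩ ⟨i', r'⟩ h
    have q1 := fun i j => (hab i j).symm
    have q2 := fun i j => (hac i j).symm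
    have q3 := fun i j => (hbc i j).symm
    simp only [g] at h
    fin_cases r <;> fin_cases r' <;> simp_all [ia.eq_iff, ib.eq_iff, ic.eq_iff]
  let ε : {x // x ∈ Set.range f} ≃ {x // x ∈ Set.range g} :=
    (Equiv.ofInjective f hf).symm.trans (Equiv.ofInjective g hg)
  let w0 : Equiv.Perm (Fin n) := ε.extendSubtype
  have hw0 : ∀ x, w0 (f x) = g x := by
    intro x
    have h := ε.extendSubtype_apply_of_mem (f x) ⟨x, rfl⟩
    change w0 (f x) = _ at h
    rw [h]
    have h' : (⟨f x, ⟨x, rfl⟩⟩ : {y // y ∈ Set.range f}) = Equiv.ofInjective f hf x := rfl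
    rw [h']
    simp [ε]
  let r := w0.symm 0
  let w : Equiv.Perm (Fin n) := (Equiv.addRight r).trans w0
  have hnb : ∀ x y, w0.symm y = w0.symm x + 1 → nb w x = y := by
    intro x y h
    have hx : w.symm x = w0.symm x - r := by simp [w, sub_eq_add_neg]
    have hy : w.symm y = w0.symm y - r := by simp [w, sub_eq_add_neg]
    have : lam n (w.symm y) = w.symm x := by
      rw [lam_apply, leftNapkin_eq, hx, hy, h]; abel
    simp only [nb, Equiv.trans_apply]
    rw [← this]; simp
  have hseat : ∀ x, w0.symm (g x) = f x := by
    intro x; rw [← hw0]; simp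
  refine ⟨w, ?_, ?_⟩
  · intro i hi
    have : i = 0 := Fin.ext (by simpa using hi)
    subst this
    simp [w, r]
  · obtain ⟨L, R, hS⟩ := dine_spec σ w
    have hc : ∀ i, c i ∈ napkinless σ w := by
      intro i
      have hi := i.isLt
      have h1n : 1 % n = 1 := Nat.mod_eq_of_lt (by omega)
      apply hS.mem_N (a := a i) (b := b i) _ _ (sa i) (sb i) (lac i) (lbc i)
      · apply hnb
        have e0 := hseat (i, 0)
        have e1 := hseat (i, 1)
        simp only [g] at e0 e1
        change w0.symm (a i) = _ at e0
        change w0.symm (c i) = _ at e1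
        rw [e0, e1]
        apply Fin.ext
        rw [Fin.val_add, Fin.val_one', h1n]
        simp only [f]
        rw [Nat.mod_eq_of_lt] <;> simp; omega
      · apply hnb
        have e0 := hseat (i, 1)
        have e1 := hseat (i, 2)
        simp only [g] at e0 e1
        change w0.symm (c i) = _ at e0
        change w0.symm (b i) = _ at e1
        rw [e0, e1]
        apply Fin.ext
        rw [Fin.val_add, Fin.val_one', h1n]
        simp only [f]
        rw [Nat.mod_eq_of_lt] <;> simp; omega
    have := Finset.card_le_card (s := Finset.univ.image c) (t := napkinless σ w) (by
      intro x hx; obtain ⟨i, -, rfl⟩ := Finset.mem_image.1 hx; exact hc i)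
    rw [Finset.card_image_of_injective _ ic] at this
    simpa [nu] using this

theorem drift_le_self (σ : Fin n → Bool) : drift σ ≤ n := by
  apply Finset.sup_le
  intro i _
  rw [sum_sign]
  have := Finset.card_le_univ (Finset.univ.filter (fun j : Fin n => (j : ℕ) < i))
  rw [Fintype.card_fin] at this
  omega

theorem nuMax_eq (hn : 1 ≤ n) (σ : Fin n → Bool) :
    nuMax σ = min (n / 3) ((n - max (drift σ) (drift fun j => !σ j)) / 2) := by
  have b1 := drift_le_self σ
  have b2 := drift_le_self (fun j => !σ j)
  apply le_antisymm
  · apply Finset.sup_le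
    intro w _
    obtain ⟨L, R, h⟩ := dine_spec σ w
    have h1 := h.card3
    have h2 := h.drift_le
    have h3 := h.flip.drift_le
    unfold nu
    omega
  · obtain ⟨w, hw, hk⟩ := exists_seating σ hn
      (min (n / 3) ((n - max (drift σ) (drift fun j => !σ j)) / 2)) (by omega) (by omega) (by omega)
    exact hk.trans (Finset.le_sup (f := nu σ) (by simpa using hw))

/-- For `n ≥ 1` and `q = ⌊n/3⌋`, with `p k` the number of preference
orders with `ν_max(σ) = k`:  for `0 ≤ k < q`, `p k` is the number of `σ` with
`⌊(n - max(h(σ),h(-σ)))/2⌋ = k`, and `p q` is the number of `σ` with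
`⌊(n - max(h(σ),h(-σ)))/2⌋ ≥ q`. -/
theorem statement14 (n : ℕ) (hn : 1 ≤ n) (q : ℕ) (hq : q = n / 3)
    (p : ℕ → ℕ)
    (hp : ∀ k, p k = ((Finset.univ : Finset (Fin n → Bool)).filter
        fun σ => nuMax σ = k).card) :
    (∀ k < q, p k = ((Finset.univ : Finset (Fin n → Bool)).filter
        fun σ => (n - max (drift σ) (drift fun j => !σ j)) / 2 = k).card) ∧
    p q = ((Finset.univ : Finset (Fin n → Bool)).filter
        fun σ => q ≤ (n - max (drift σ) (drift fun j => !σ j)) / 2).card := by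
  subst hq
  refine ⟨fun k hk => ?_, ?_⟩
  · rw [hp]
    congr 1
    apply Finset.filter_congr
    intro σ _
    rw [nuMax_eq hn]
    omega
  · rw [hp]
    congr 1
    apply Finset.filter_congr
    intro σ _
    rw [nuMax_eq hn]
    omega

end Napkin
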